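/- arXiv:math/0403438 — 3 statements merged into one kernel-verified Lean document; each statement's English description precedes it below -/
import Mathlib

section
/- Let ℓ : (0,∞) → (0,∞) be slowly varying at ∞ (i.e., for every c > 0, ℓ(ct)/ℓ(t) → 1 as t → ∞), let 0 < α < 1, and let ν̃ be a Borel measure on (0,1] with ν̃([x,1]) finite for every x > 0 and ν̃([x,1]) x^α / ℓ(1/x) → 1 as x ↓ 0. Let m ≥ 1 be an integer, c > 0, and let h : (0,∞) → [0,∞) be a nondecreasing function with h(ρ) / (ρ^α ℓ(ρ))^{m−1} → c as ρ → ∞. Then ∫₀¹ (1 − e^{−ρx}) h(ρ(1−x)) ν̃(dx) / (ρ^α ℓ(ρ))^m → Γ(1−α) c as ρ → ∞, where Γ is the Gamma function. -/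
open Filter MeasureTheory Real

lemma pia_iter (V : ℝ → ℝ) (b ρ : ℝ) (hb : 0 ≤ b) (hρ : 0 < ρ)
    (h2 : ∀ s, ρ ≤ s → V (2 * s) ≤ b * V s) (n : ℕ) : V (2 ^ n * ρ) ≤ b ^ n * V ρ := by
  induction n with
  | zero => simp
  | succ k ih =>
    have h1 : ρ ≤ 2 ^ k * ρ := le_mul_of_one_le_left hρ.le (one_le_pow₀ (by norm_num))
    calc V (2 ^ (k+1) * ρ) = V (2 * (2 ^ k * ρ)) := by congr 1; ring
      _ ≤ b * V (2 ^ k * ρ) := h2 _ h1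
      _ ≤ b * (b ^ k * V ρ) := by gcongr
      _ = _ := by ring

lemma pia_potter (V : ℝ → ℝ) (hm : ∀ s t, 0 < s → s ≤ t → V s ≤ V t)
    (hpos : ∀ᶠ s in atTop, 0 < V s) (α β : ℝ) (hα : 0 < α) (hβ : α < β)
    (hV : Tendsto (fun s => V (2 * s) / V s) atTop (nhds (2 ^ α))) :
    ∃ ρ0 : ℝ, 0 < ρ0 ∧ ∀ ρ, ρ0 ≤ ρ → 0 < V ρ ∧ ∀ t, 1 ≤ t → V (t * ρ) ≤ 2 ^ β * t ^ β * V ρ := by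
  have h1 : (2:ℝ) ^ α < 2 ^ β := Real.rpow_lt_rpow_of_exponent_lt (by norm_num) hβ
  have h2 := hV.eventually (gt_mem_nhds h1)
  obtain ⟨A, hA⟩ := eventually_atTop.1 (h2.and hpos)
  refine ⟨max A 1, by positivity, fun ρ hρ => ?_⟩
  have hρA : A ≤ ρ := (le_max_left _ _).trans hρ
  have hρ0 : 0 < ρ := lt_of_lt_of_le (by positivity) hρ
  refine ⟨(hA ρ hρA).2, fun t ht => ?_⟩
  obtain ⟨n, hn1, hn2⟩ := exists_nat_pow_near ht (by norm_num : (1:ℝ) < 2)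
  have h3 : ∀ s, ρ ≤ s → V (2 * s) ≤ (2 ^ β) * V s := by
    intro s hs
    have := hA s (hρA.trans hs)
    exact ((div_lt_iff₀ this.2).1 this.1).le
  have hVρ := (hA ρ hρA).2
  calc V (t * ρ) ≤ V (2 ^ (n+1) * ρ) := hm _ _ (by positivity) (by gcongr)
    _ ≤ ((2:ℝ) ^ β) ^ (n+1) * V ρ := pia_iter V _ ρ (by positivity) hρ0 h3 _
    _ = 2 ^ β * ((2:ℝ) ^ n) ^ β * V ρ := by
      rw [pow_succ, ← Real.rpow_natCast, ← Real.rpow_natCast, ← Real.rpow_mul (by norm_num),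
        ← Real.rpow_mul (by norm_num), mul_comm β]; ring
    _ ≤ _ := by
      gcongr
      exact (hα.trans hβ).le

lemma pia_top (V : ℝ → ℝ) (hm : ∀ s t, 0 < s → s ≤ t → V s ≤ V t)
    (hpos : ∀ᶠ s in atTop, 0 < V s) (α : ℝ) (hα : 0 < α)
    (hV : Tendsto (fun s => V (2 * s) / V s) atTop (nhds (2 ^ α))) :
    Tendsto V atTop atTop := by
  have h1 : (1:ℝ) < 2 ^ α := Real.one_lt_rpow (by norm_num) hα
  obtain ⟨q, hq1, hq2⟩ := exists_between h1
  have h2 := hV.eventually (lt_mem_nhds hq2)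
  obtain ⟨A, hA⟩ := eventually_atTop.1 (h2.and hpos)
  set ρ := max A 1
  have hρ0 : 0 < ρ := by positivity
  have hρA : A ≤ ρ := le_max_left _ _
  have h3 := fun n => pia_iter (fun s => - V s) q ρ (by linarith) hρ0 (by
    intro s hs
    have := hA s (hρA.trans hs)
    have := ((lt_div_iff₀ this.2).1 this.1).le
    linarith) n
  have hVρ := (hA ρ hρA).2
  rw [tendsto_atTop]
  intro M
  obtain ⟨n, hn⟩ := pow_unbounded_of_one_lt (M / V ρ) hq1
  rw [div_lt_iff₀ hVρ] at hn
  filter_upwards [eventually_ge_atTop (2 ^ n * ρ)] with s hs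
  have := hm _ _ (by positivity) hs
  have := h3 n
  linarith

/-- Karamata-type dominated convergence. -/
lemma pia_karamata (V : ℝ → ℝ) (hm : ∀ s t, 0 < s → s ≤ t → V s ≤ V t)
    (hnn : ∀ s, 0 ≤ V s)
    (hpos : ∀ᶠ s in atTop, 0 < V s) (α : ℝ) (hα : 0 < α) (hα1 : α < 1)
    (hV : ∀ t, 0 < t → Tendsto (fun s => V (t * s) / V s) atTop (nhds (t ^ α))) :
    (∀ᶠ ρ in atTop, IntegrableOn (fun u => V (ρ / u) * Real.exp (-u)) (Set.Ioi 0)) ∧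
    Tendsto (fun ρ => (∫ u in Set.Ioi (0:ℝ), V (ρ / u) * Real.exp (-u)) / V ρ) atTop
      (nhds (Real.Gamma (1 - α))) := by
  obtain ⟨β, hβ, hβ1⟩ := exists_between hα1
  obtain ⟨ρ0, hρ0, hP⟩ := pia_potter V hm hpos α β hα hβ (hV 2 (by norm_num))
  set B : ℝ → ℝ := fun u => Real.exp (-u) * u ^ ((1:ℝ) - 1) +
    2 ^ β * (Real.exp (-u) * u ^ ((1 - β) - 1)) with hB
  have hBint : IntegrableOn B (Set.Ioi 0) :=
    (Real.GammaIntegral_convergent (by norm_num)).add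
      ((Real.GammaIntegral_convergent (by linarith)).const_mul _)
  have hbound : ∀ ρ, ρ0 ≤ ρ → ∀ u ∈ Set.Ioi (0:ℝ), V (ρ / u) * Real.exp (-u) ≤ V ρ * B u := by
    intro ρ hρ u hu
    have hu : 0 < u := hu
    have hρp : 0 < ρ := hρ0.trans_le hρ
    obtain ⟨hVp, hPt⟩ := hP ρ hρ
    have key : V (ρ / u) ≤ V ρ * (1 + 2 ^ β * u ^ (-β)) := by
      rcases le_total 1 u with h1 | h1
      · have : V (ρ / u) ≤ V ρ := hm _ _ (by positivity) (div_le_self hρp.le h1)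
        have h2 : 0 ≤ V ρ * ((2:ℝ) ^ β * u ^ (-β)) := by positivity
        linarith
      · have := hPt (1 / u) ((one_le_div hu).2 h1)
        rw [one_div_mul_eq_div, one_div, Real.inv_rpow hu.le, ← Real.rpow_neg hu.le] at this
        linarith
    calc _ ≤ V ρ * (1 + 2 ^ β * u ^ (-β)) * Real.exp (-u) := by gcongr
      _ = _ := by
        simp only [hB, sub_self, Real.rpow_zero]
        rw [show (1 - β - 1) = -β by ring]; ring
  have hmeas : ∀ ρ, 0 < ρ → AEStronglyMeasurable (fun u => V (ρ / u) * Real.exp (-u))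
      (volume.restrict (Set.Ioi 0)) := by
    intro ρ hρ
    refine AEMeasurable.aestronglyMeasurable (AEMeasurable.mul ?_ (by fun_prop))
    apply aemeasurable_restrict_of_antitoneOn measurableSet_Ioi
    intro x hx y hy hxy
    have hx : 0 < x := hx
    have hy : 0 < y := hy
    exact hm _ _ (by positivity) (by gcongr)
  refine ⟨?_, ?_⟩
  · filter_upwards [eventually_ge_atTop ρ0] with ρ hρ
    refine Integrable.mono' (hBint.const_mul (V ρ)) (hmeas ρ (hρ0.trans_le hρ)) ?_
    filter_upwards [ae_restrict_mem measurableSet_Ioi] with u hu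
    rw [Real.norm_of_nonneg (mul_nonneg (hnn _) (Real.exp_pos _).le)]
    exact hbound ρ hρ u hu
  · have : Tendsto (fun ρ => (∫ u in Set.Ioi (0:ℝ), V (ρ / u) * Real.exp (-u) / V ρ)) atTop
      (nhds (∫ u in Set.Ioi (0:ℝ), Real.exp (-u) * u ^ ((1 - α) - 1))) := by
      apply tendsto_integral_filter_of_dominated_convergence B
      · filter_upwards [eventually_ge_atTop ρ0] with ρ hρ
        have := (hmeas ρ (hρ0.trans_le hρ)).mul_const ((V ρ)⁻¹)
        simpa only [div_eq_mul_inv] using this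
      · filter_upwards [eventually_ge_atTop ρ0] with ρ hρ
        filter_upwards [ae_restrict_mem measurableSet_Ioi] with u hu
        have hVp := (hP ρ hρ).1
        rw [Real.norm_of_nonneg (div_nonneg (mul_nonneg (hnn _) (Real.exp_pos _).le) hVp.le),
          div_le_iff₀ hVp, mul_comm (B u)]
        exact hbound ρ hρ u hu
      · exact hBint
      · filter_upwards [ae_restrict_mem measurableSet_Ioi] with u hu
        have hu : 0 < u := hu
        have h1 := (hV (1 / u) (by positivity)).mul_const (Real.exp (-u))
        rw [one_div, Real.inv_rpow hu.le, ← Real.rpow_neg hu.le] at h1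
        convert h1 using 2 with ρ
        · rw [div_eq_mul_inv ρ u, mul_comm ρ]; ring
        · rw [show (1 - α - 1) = -α by ring]; ring
    rw [Real.Gamma_eq_integral (by linarith)]
    simpa only [integral_div] using this

lemma pia_layer (ν : Measure ℝ) (hfin : ∀ x : ℝ, 0 < x → ν (Set.Icc x 1) ≠ ⊤)
    (ρ : ℝ) (hρ : 0 < ρ)
    (hint : IntegrableOn (fun u => (ν (Set.Icc (1 / (ρ / u)) 1)).toReal * Real.exp (-u))
      (Set.Ioi 0)) :
    IntegrableOn (fun x => 1 - Real.exp (-(ρ * x))) (Set.Ioc 0 1) ν ∧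
    ∫ x in Set.Ioc (0:ℝ) 1, (1 - Real.exp (-(ρ * x))) ∂ν =
      ∫ u in Set.Ioi (0:ℝ), (ν (Set.Icc (1 / (ρ / u)) 1)).toReal * Real.exp (-u) := by
  have hnn : 0 ≤ᵐ[ν.restrict (Set.Ioc 0 1)] fun x => 1 - Real.exp (-(ρ * x)) := by
    filter_upwards [ae_restrict_mem measurableSet_Ioc] with x hx
    have : 0 ≤ ρ * x := mul_nonneg hρ.le hx.1.le
    simp [this]
  have hms : AEStronglyMeasurable (fun x => 1 - Real.exp (-(ρ * x)))
      (ν.restrict (Set.Ioc 0 1)) := by fun_prop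
  have hL := lintegral_comp_eq_lintegral_meas_le_mul (f := fun x => ρ * x)
    (g := fun u => Real.exp (-u)) (ν.restrict (Set.Ioc 0 1))
    (by
      filter_upwards [ae_restrict_mem measurableSet_Ioc] with x hx
      exact mul_nonneg hρ.le hx.1.le) (by fun_prop)
    (fun t _ => Continuous.intervalIntegrable (by fun_prop) _ _)
    (Eventually.of_forall fun t => (Real.exp_pos _).le)
  have hI : ∀ y : ℝ, ∫ t in (0:ℝ)..y, Real.exp (-t) = 1 - Real.exp (-y) := by
    intro y
    rw [intervalIntegral.integral_comp_neg (fun t => Real.exp t), integral_exp]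
    simp
  simp only [hI] at hL
  have hR : ∫⁻ (t : ℝ) in Set.Ioi 0, (ν.restrict (Set.Ioc 0 1)) {a | t ≤ ρ * a} *
      ENNReal.ofReal (Real.exp (-t)) = ∫⁻ (t : ℝ) in Set.Ioi 0,
      ENNReal.ofReal ((ν (Set.Icc (1 / (ρ / t)) 1)).toReal * Real.exp (-t)) := by
    apply setLIntegral_congr_fun measurableSet_Ioi
    intro t ht
    have ht : 0 < t := ht
    have e1 : {a | t ≤ ρ * a} ∩ Set.Ioc 0 1 = Set.Icc (1 / (ρ / t)) 1 := by
      ext a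
      simp only [Set.mem_inter_iff, Set.mem_ofPred_eq, Set.mem_Ioc, Set.mem_Icc, one_div_div,
        div_le_iff₀ hρ, mul_comm a ρ]
      constructor
      · rintro ⟨h1, h2, h3⟩; exact ⟨h1, h3⟩
      · rintro ⟨h1, h3⟩
        exact ⟨h1, pos_of_mul_pos_right (ht.trans_le h1) hρ.le, h3⟩
    simp only
    rw [Measure.restrict_apply (measurableSet_le (by fun_prop) (by fun_prop)), e1,
      ENNReal.ofReal_mul ENNReal.toReal_nonneg, ENNReal.ofReal_toReal (hfin _ (by positivity))]
  rw [hR] at hL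
  have hnn2 : 0 ≤ᵐ[volume.restrict (Set.Ioi 0)]
      fun u => (ν (Set.Icc (1 / (ρ / u)) 1)).toReal * Real.exp (-u) :=
    Eventually.of_forall fun u => by positivity
  refine ⟨⟨hms, ?_⟩, ?_⟩
  · rw [hasFiniteIntegral_iff_ofReal hnn, hL, ← hasFiniteIntegral_iff_ofReal hnn2]
    exact hint.2
  · rw [integral_eq_lintegral_of_nonneg_ae hnn hms, hL,
      integral_eq_lintegral_of_nonneg_ae hnn2 hint.1]

lemma pia_bounds (ν : Measure ℝ) (hfin : ∀ x : ℝ, 0 < x → ν (Set.Icc x 1) ≠ ⊤)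
    (h : ℝ → ℝ) (hnonneg : ∀ ρ : ℝ, 0 < ρ → 0 ≤ h ρ)
    (hmono : MonotoneOn h (Set.Ioi (0 : ℝ))) (ρ : ℝ) (hρ : 0 < ρ)
    (hint : IntegrableOn (fun x => 1 - Real.exp (-(ρ * x))) (Set.Ioc 0 1) ν) :
    (∫ x in Set.Ioc (0 : ℝ) 1, (1 - Real.exp (-(ρ * x))) * h (ρ * (1 - x)) ∂ν) ≤
      h ρ * (∫ x in Set.Ioc (0 : ℝ) 1, (1 - Real.exp (-(ρ * x))) ∂ν) +
        (ν (Set.Icc 1 1)).toReal * |h 0| ∧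
    ∀ δ, 0 < δ → δ < 1 →
      h ((1 - δ) * ρ) * ((∫ x in Set.Ioc (0 : ℝ) 1, (1 - Real.exp (-(ρ * x))) ∂ν) -
        (ν (Set.Icc δ 1)).toReal) - (ν (Set.Icc 1 1)).toReal * |h 0| ≤
      (∫ x in Set.Ioc (0 : ℝ) 1, (1 - Real.exp (-(ρ * x))) * h (ρ * (1 - x)) ∂ν) := by
  have hi : ∀ δ, 0 < δ → ∀ e : ℝ,
      IntegrableOn ((Set.Icc δ 1).indicator fun _ => e) (Set.Ioc 0 1) ν ∧
      ∫ x in Set.Ioc (0 : ℝ) 1, (Set.Icc δ 1).indicator (fun _ => e) x ∂ν =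
        (ν (Set.Icc δ 1)).toReal * e := by
    intro δ hδ e
    have hs : Set.Icc δ 1 ∩ Set.Ioc 0 1 = Set.Icc δ 1 :=
      Set.inter_eq_left.2 fun x hx => ⟨hδ.trans_le hx.1, hx.2⟩
    have hr : (ν.restrict (Set.Ioc 0 1)) (Set.Icc δ 1) = ν (Set.Icc δ 1) := by
      rw [Measure.restrict_apply measurableSet_Icc, hs]
    constructor
    · unfold IntegrableOn
      rw [integrable_indicator_iff measurableSet_Icc]
      apply integrableOn_const
      · rw [hr]; exact hfin δ hδ
      · simp
    · rw [integral_indicator_const _ measurableSet_Icc, Measure.real, hr, smul_eq_mul]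
  have hE : ∀ x ∈ Set.Ioc (0:ℝ) 1, 0 ≤ 1 - Real.exp (-(ρ * x)) ∧ 1 - Real.exp (-(ρ * x)) ≤ 1 := by
    intro x hx
    have h1 : 0 ≤ ρ * x := mul_nonneg hρ.le hx.1.le
    have := Real.exp_pos (-(ρ * x))
    have : Real.exp (-(ρ * x)) ≤ 1 := by simp [h1]
    constructor <;> linarith
  have hhρ : 0 ≤ h ρ := hnonneg ρ hρ
  have hh : ∀ x ∈ Set.Ioc (0:ℝ) 1, x < 1 → 0 ≤ h (ρ * (1 - x)) ∧ h (ρ * (1 - x)) ≤ h ρ := by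
    intro x hx hx1
    have h1 : 0 < ρ * (1 - x) := mul_pos hρ (by linarith)
    exact ⟨hnonneg _ h1, hmono h1 hρ (by nlinarith [hx.1])⟩
  have hJm : AEStronglyMeasurable (fun x => (1 - Real.exp (-(ρ * x))) * h (ρ * (1 - x)))
      (ν.restrict (Set.Ioc 0 1)) := by
    refine AEStronglyMeasurable.mul hint.1 ?_
    have hg : Antitone fun x : ℝ => if x < 1 then h (ρ * (1 - x)) else 0 := by
      intro x y hxy
      simp only
      split_ifs with h1 h2
      · exact hmono (mul_pos hρ (by linarith)) (mul_pos hρ (by linarith)) (by gcongr)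
      · linarith
      · exact hnonneg _ (mul_pos hρ (by linarith))
      · exact le_rfl
    have hg2 : Measurable fun x : ℝ => (if x < 1 then h (ρ * (1 - x)) else 0) +
        (Set.Icc (1:ℝ) 1).indicator (fun _ => h 0) x :=
      hg.measurable.add (measurable_const.indicator measurableSet_Icc)
    refine hg2.aestronglyMeasurable.congr ?_
    filter_upwards [ae_restrict_mem measurableSet_Ioc] with x hx
    rcases hx.2.lt_or_eq with h1 | h1
    · simp [h1, h1.ne]
    · simp [h1]
  have hJi : IntegrableOn (fun x => (1 - Real.exp (-(ρ * x))) * h (ρ * (1 - x)))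
      (Set.Ioc 0 1) ν := by
    refine Integrable.mono' (hint.const_mul (h ρ + |h 0|)) hJm ?_
    filter_upwards [ae_restrict_mem measurableSet_Ioc] with x hx
    rw [norm_mul, Real.norm_of_nonneg (hE x hx).1, mul_comm]
    refine mul_le_mul_of_nonneg_right ?_ (hE x hx).1
    rcases hx.2.lt_or_eq with h1 | h1
    · rw [Real.norm_of_nonneg (hh x hx h1).1]
      linarith [(hh x hx h1).2, abs_nonneg (h 0)]
    · simp [h1, hhρ]
  constructor
  · rw [← (hi 1 one_pos |h 0|).2, ← integral_const_mul,
      ← integral_add (hint.const_mul (h ρ)) (hi 1 one_pos |h 0|).1]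
    refine setIntegral_mono_on hJi ((hint.const_mul (h ρ)).add (hi 1 one_pos |h 0|).1)
      measurableSet_Ioc ?_
    intro x hx
    obtain ⟨e0, e1⟩ := hE x hx
    rcases hx.2.lt_or_eq with h1 | h1
    · simp only [Set.Icc_self, Set.mem_singleton_iff, h1.ne, not_false_eq_true,
        Set.indicator_of_notMem, add_zero]
      rw [mul_comm]
      exact mul_le_mul_of_nonneg_right (hh x hx h1).2 e0
    · subst h1
      simp only [Set.Icc_self, Set.mem_singleton_iff, Set.indicator_of_mem, sub_self, mul_zero]
      have := mul_nonneg hhρ e0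
      have := mul_le_mul_of_nonneg_left (le_abs_self (h 0)) e0
      have := mul_le_mul_of_nonneg_right e1 (abs_nonneg (h 0))
      linarith
  · intro δ hδ hδ1
    have hp : 0 < (1 - δ) * ρ := mul_pos (by linarith) hρ
    have hk := hnonneg _ hp
    have hδi := hi δ hδ 1
    rw [mul_one] at hδi
    have hq : IntegrableOn (fun x => h ((1 - δ) * ρ) * (1 - Real.exp (-(ρ * x)) -
        (Set.Icc δ 1).indicator (fun _ => 1) x)) (Set.Ioc 0 1) ν :=
      (hint.sub hδi.1).const_mul _
    rw [← (hi 1 one_pos |h 0|).2, ← hδi.2, ← integral_sub hint hδi.1, ← integral_const_mul,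
      ← integral_sub hq (hi 1 one_pos |h 0|).1]
    refine setIntegral_mono_on (hq.sub (hi 1 one_pos |h 0|).1) hJi
      measurableSet_Ioc ?_
    intro x hx
    obtain ⟨e0, e1⟩ := hE x hx
    rcases hx.2.lt_or_eq with h1 | h1
    · simp only [Set.Icc_self, Set.mem_singleton_iff, h1.ne, not_false_eq_true,
        Set.indicator_of_notMem, sub_zero]
      rcases le_or_gt δ x with h2 | h2
      · rw [Set.indicator_of_mem (Set.mem_Icc.2 ⟨h2, hx.2⟩)]
        have := mul_nonneg e0 (hh x hx h1).1
        nlinarith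
      · rw [Set.indicator_of_notMem (by simp [h2]), sub_zero, mul_comm]
        refine mul_le_mul_of_nonneg_left ?_ e0
        exact hmono hp (mul_pos hρ (by linarith)) (by nlinarith)
    · subst h1
      rw [Set.indicator_of_mem (Set.mem_Icc.2 ⟨hδ1.le, le_rfl⟩)]
      simp only [Set.Icc_self, Set.mem_singleton_iff, Set.indicator_of_mem, sub_self, mul_zero]
      have := mul_le_mul_of_nonneg_left (neg_abs_le (h 0)) e0
      have := mul_le_mul_of_nonneg_right e1 (abs_nonneg (h 0))
      nlinarith

/-- Induction-step asymptotics for the poissonized recursion: if `ℓ` is slowly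
varying at `∞`, `0 < α < 1`, `ν̃` has finite tails with
`ν̃([x,1]) x^α / ℓ(1/x) → 1` as `x ↓ 0`, and `h` is nondecreasing nonnegative with
`h(ρ)/(ρ^α ℓ(ρ))^{m-1} → c > 0`, then
`∫₀¹ (1-e^{-ρx}) h(ρ(1-x)) ν̃(dx) / (ρ^α ℓ(ρ))^m → Γ(1-α) c`. -/
theorem poissonized_integral_asymptotics (ℓ : ℝ → ℝ)
    (hℓpos : ∀ t : ℝ, 0 < t → 0 < ℓ t)
    (hℓsv : ∀ c : ℝ, 0 < c → Tendsto (fun t : ℝ => ℓ (c * t) / ℓ t) atTop (nhds 1))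
    (α : ℝ) (hα0 : 0 < α) (hα1 : α < 1)
    (ν : Measure ℝ) (hsupp : ν (Set.Ioc (0 : ℝ) 1)ᶜ = 0)
    (hfin : ∀ x : ℝ, 0 < x → ν (Set.Icc x 1) ≠ ⊤)
    (hlim : Tendsto (fun x : ℝ => (ν (Set.Icc x 1)).toReal * x ^ α / ℓ (1 / x))
      (nhdsWithin 0 (Set.Ioi 0)) (nhds 1))
    (m : ℕ) (hm : 1 ≤ m) (c : ℝ) (hc : 0 < c)
    (h : ℝ → ℝ)
    (hnonneg : ∀ ρ : ℝ, 0 < ρ → 0 ≤ h ρ)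
    (hmono : MonotoneOn h (Set.Ioi (0 : ℝ)))
    (hlimh : Tendsto (fun ρ : ℝ => h ρ / (ρ ^ α * ℓ ρ) ^ (m - 1)) atTop (nhds c)) :
    Tendsto (fun ρ : ℝ =>
        (∫ x in Set.Ioc (0 : ℝ) 1, (1 - Real.exp (-(ρ * x))) * h (ρ * (1 - x)) ∂ν) /
          (ρ ^ α * ℓ ρ) ^ m)
      atTop (nhds (Real.Gamma (1 - α) * c)) := by
  set K : ℝ → ℝ := fun ρ => ρ ^ α * ℓ ρ with hK
  set V : ℝ → ℝ := fun s => (ν (Set.Icc (1 / s) 1)).toReal with hVdef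
  have hKpos : ∀ ρ, 0 < ρ → 0 < K ρ := fun ρ hρ => mul_pos (Real.rpow_pos_of_pos hρ _) (hℓpos ρ hρ)
  have hVnn : ∀ s, 0 ≤ V s := fun s => ENNReal.toReal_nonneg
  have hVm : ∀ s t, 0 < s → s ≤ t → V s ≤ V t := by
    intro s t hs hst
    have ht : 0 < t := hs.trans_le hst
    exact ENNReal.toReal_mono (hfin _ (by positivity))
      (measure_mono (Set.Icc_subset_Icc_left (by gcongr)))
  have hVK : Tendsto (fun ρ => V ρ / K ρ) atTop (nhds 1) := by
    refine (hlim.comp tendsto_inv_atTop_nhdsGT_zero).congr' ?_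
    filter_upwards [eventually_gt_atTop 0] with ρ hρ
    simp only [Function.comp, hVdef, hK, one_div, inv_inv]
    rw [Real.inv_rpow hρ.le, div_mul_eq_div_div]
    rfl
  have hmulTop : ∀ t : ℝ, 0 < t → Tendsto (fun ρ : ℝ => t * ρ) atTop atTop :=
    fun t ht => tendsto_id.const_mul_atTop ht
  have hKK : ∀ t, 0 < t → Tendsto (fun ρ => K (t * ρ) / K ρ) atTop (nhds (t ^ α)) := by
    intro t ht
    have := (hℓsv t ht).const_mul (t ^ α)
    rw [mul_one] at this
    refine this.congr' ?_
    filter_upwards [eventually_gt_atTop 0] with ρ hρ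
    have h1 := hℓpos ρ hρ
    have h2 : 0 < ρ ^ α := Real.rpow_pos_of_pos hρ _
    simp only [hK]
    rw [Real.mul_rpow ht.le hρ.le]
    field_simp
  have hVpos : ∀ᶠ s in atTop, 0 < V s := by
    filter_upwards [hVK.eventually (lt_mem_nhds one_pos), eventually_gt_atTop 0] with s hs h0
    exact (div_pos_iff_of_pos_right (hKpos s h0)).1 hs
  have hVV : ∀ t, 0 < t → Tendsto (fun s => V (t * s) / V s) atTop (nhds (t ^ α)) := by
    intro t ht
    have h1 := ((hVK.comp (hmulTop t ht)).mul (hKK t ht)).div hVK one_ne_zero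
    rw [one_mul, div_one] at h1
    refine h1.congr' ?_
    filter_upwards [eventually_gt_atTop 0, hVpos] with ρ hρ hv
    have h2 := hKpos ρ hρ
    have h3 := hKpos (t * ρ) (by positivity)
    simp only [Function.comp, Pi.div_apply, Pi.mul_apply]
    field_simp
  have hVtop : Tendsto V atTop atTop := pia_top V hVm hVpos α hα0 (hVV 2 two_pos)
  have hKtop : Tendsto K atTop atTop := by
    have h1 := hVtop.atTop_mul_pos one_pos (hVK.inv₀ one_ne_zero |>.trans (by simp))
    refine h1.congr' ?_
    filter_upwards [hVpos] with ρ hv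
    simp only [inv_div]
    field_simp
  obtain ⟨hInt, hGam⟩ := pia_karamata V hVm hVnn hVpos α hα0 hα1 hVV
  set I : ℝ → ℝ := fun ρ => ∫ x in Set.Ioc (0 : ℝ) 1, (1 - Real.exp (-(ρ * x))) ∂ν with hI
  set J : ℝ → ℝ := fun ρ =>
    ∫ x in Set.Ioc (0 : ℝ) 1, (1 - Real.exp (-(ρ * x))) * h (ρ * (1 - x)) ∂ν with hJ
  have hIK : Tendsto (fun ρ => I ρ / K ρ) atTop (nhds (Real.Gamma (1 - α))) := by
    have h1 := hGam.mul hVK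
    rw [mul_one] at h1
    refine h1.congr' ?_
    filter_upwards [hInt, hVpos, eventually_gt_atTop 0] with ρ hi hv hρ
    have h2 := (pia_layer ν hfin ρ hρ hi).2
    simp only [hI]
    rw [h2, div_mul_div_cancel₀ hv.ne']
  have hΓ : 0 < Real.Gamma (1 - α) := Real.Gamma_pos_of_pos (by linarith)
  obtain ⟨k, rfl⟩ : ∃ k, m = k + 1 := ⟨m - 1, by omega⟩
  simp only [Nat.add_sub_cancel] at hlimh
  set D : ℝ := (ν (Set.Icc 1 1)).toReal * |h 0| with hD
  have hDK : Tendsto (fun ρ => D / K ρ ^ (k + 1)) atTop (nhds 0) :=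
    tendsto_const_nhds.div_atTop ((tendsto_pow_atTop (by omega)).comp hKtop)
  have hup : Tendsto (fun ρ => h ρ / K ρ ^ k * (I ρ / K ρ) + D / K ρ ^ (k + 1)) atTop
      (nhds (Real.Gamma (1 - α) * c)) := by
    have := (hlimh.mul hIK).add hDK
    rwa [add_zero, mul_comm c] at this
  have hlow : ∀ δ, 0 < δ → δ < 1 → Tendsto (fun ρ => h ((1 - δ) * ρ) / K ((1 - δ) * ρ) ^ k *
      (K ((1 - δ) * ρ) / K ρ) ^ k * (I ρ / K ρ - (ν (Set.Icc δ 1)).toReal / K ρ)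
        - D / K ρ ^ (k + 1)) atTop
      (nhds (c * ((1 - δ) ^ α) ^ k * Real.Gamma (1 - α))) := by
    intro δ hδ hδ1
    have h1 : 0 < 1 - δ := by linarith
    have h2 : Tendsto (fun ρ => (ν (Set.Icc δ 1)).toReal / K ρ) atTop (nhds 0) :=
      tendsto_const_nhds.div_atTop hKtop
    have := (((hlimh.comp (hmulTop _ h1)).mul ((hKK _ h1).pow k)).mul (hIK.sub h2)).sub hDK
    rwa [sub_zero, sub_zero] at this
  rw [tendsto_order]
  constructor
  · intro a ha
    have hcont : Tendsto (fun δ : ℝ => c * ((1 - δ) ^ α) ^ k * Real.Gamma (1 - α))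
        (nhdsWithin 0 (Set.Ioi 0)) (nhds (Real.Gamma (1 - α) * c)) := by
      have h1 : ContinuousAt (fun δ : ℝ => c * ((1 - δ) ^ α) ^ k * Real.Gamma (1 - α)) 0 := by
        have : ContinuousAt (fun δ : ℝ => (1 - δ) ^ α) 0 :=
          ContinuousAt.rpow_const (by fun_prop) (by simp)
        fun_prop
      have h2 := h1.tendsto.mono_left (nhdsWithin_le_nhds (s := Set.Ioi 0))
      simpa [mul_comm c] using h2
    obtain ⟨δ, hδa, hδ0, hδ1⟩ := ((hcont.eventually (lt_mem_nhds ha)).and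
      (Ioo_mem_nhdsGT (zero_lt_one' ℝ))).exists
    filter_upwards [(hlow δ hδ0 hδ1).eventually (lt_mem_nhds hδa), hInt, eventually_gt_atTop 0]
      with ρ h1 hi hρ
    refine h1.trans_le ?_
    have hb := (pia_bounds ν hfin h hnonneg hmono ρ hρ (pia_layer ν hfin ρ hρ hi).1).2 δ hδ0 hδ1
    have hkp := hKpos ρ hρ
    have hkp2 := hKpos ((1 - δ) * ρ) (mul_pos (by linarith) hρ)
    calc _ = (h ((1 - δ) * ρ) * (I ρ - (ν (Set.Icc δ 1)).toReal) - D) / K ρ ^ (k + 1) := by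
          rw [div_pow]
          field_simp
          ring
      _ ≤ _ := div_le_div_of_nonneg_right hb (by positivity)
  · intro a ha
    filter_upwards [hup.eventually (gt_mem_nhds ha), hInt, eventually_gt_atTop 0] with ρ h1 hi hρ
    refine lt_of_le_of_lt ?_ h1
    have hb := (pia_bounds ν hfin h hnonneg hmono ρ hρ (pia_layer ν hfin ρ hρ hi).1).1
    have hkp := hKpos ρ hρ
    calc _ ≤ (h ρ * I ρ + D) / K ρ ^ (k + 1) := div_le_div_of_nonneg_right hb (by positivity)
      _ = _ := by field_simp; ring
end

section
/- Fix u > 1 and define ℓ : (0,∞) → (0,∞) by ℓ(s) = (log s)^{−u} for s ≥ e and ℓ(s) = 1 for 0 < s < e. Then ℓ is slowly varying at ∞, the integral ℓ*(t) = ∫₀^∞ e^{−1/y} y^{−1} ℓ(ty) dy converges for every t > 0, and ℓ*(t) · (u−1) · (log t)^{u−1} → 1 as t → ∞; that is, ℓ*(t) ∼ (u−1)^{−1} (log t)^{1−u}. -/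
open Filter MeasureTheory Real

noncomputable def gAux (u s : ℝ) : ℝ := if Real.exp 1 ≤ s then (Real.log s) ^ (-u) else 1

lemma gAux_meas (u : ℝ) : Measurable (gAux u) := by
  unfold gAux
  refine Measurable.ite measurableSet_Ici ?_ measurable_const
  exact Real.measurable_log.pow_const _

lemma gAux_nonneg (u s : ℝ) : 0 ≤ gAux u s := by
  unfold gAux
  split_ifs with h
  · have : 1 ≤ Real.log s := by
      rw [Real.le_log_iff_exp_le (lt_of_lt_of_le (Real.exp_pos 1) h)]; exact h
    positivity
  · norm_num

lemma gAux_le_one (u s : ℝ) (hu : 1 < u) : gAux u s ≤ 1 := by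
  unfold gAux
  split_ifs with h
  · have : 1 ≤ Real.log s := by
      rw [Real.le_log_iff_exp_le (lt_of_lt_of_le (Real.exp_pos 1) h)]; exact h
    exact Real.rpow_le_one_of_one_le_of_nonpos this (by linarith)
  · norm_num

lemma kern_le (y : ℝ) (hy : 0 < y) : Real.exp (-1 / y) * y⁻¹ ≤ y := by
  have h1 : (y⁻¹) ^ 2 ≤ Real.exp (y⁻¹) := by
    have hx : 0 < y⁻¹ := inv_pos.mpr hy
    have h2 : y⁻¹ ≤ Real.exp (y⁻¹ / 2) := by
      have h3 := Real.quadratic_le_exp_of_nonneg (x := y⁻¹ / 2) (by positivity)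
      nlinarith [sq_nonneg (y⁻¹ / 2 - 1)]
    calc (y⁻¹) ^ 2 ≤ (Real.exp (y⁻¹ / 2)) ^ 2 := by gcongr
      _ = Real.exp (y⁻¹) := by rw [← Real.exp_nat_mul]; congr 1; push_cast; ring
  have h4 : -1 / y = -(y⁻¹) := by ring
  rw [h4, Real.exp_neg]
  rw [inv_mul_le_iff₀ (Real.exp_pos _)]
  calc y⁻¹ = (y⁻¹) ^ 2 * y := by field_simp
    _ ≤ _ := by gcongr

lemma kern_le_one (y : ℝ) (hy : 0 < y) : Real.exp (-1 / y) * y⁻¹ ≤ 1 := by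
  have h1 := Real.add_one_le_exp (y⁻¹)
  have h4 : -1 / y = -(y⁻¹) := by ring
  rw [h4, Real.exp_neg, inv_mul_le_iff₀ (Real.exp_pos _)]
  linarith

lemma kern_nonneg (y : ℝ) (hy : 0 < y) : 0 ≤ Real.exp (-1 / y) * y⁻¹ := by positivity

lemma exp_le_one_aux (y : ℝ) (hy : 0 < y) : Real.exp (-1 / y) ≤ 1 := by
  rw [Real.exp_le_one_iff]
  exact div_nonpos_of_nonpos_of_nonneg (by norm_num) hy.le

lemma tail_aux (u t a : ℝ) (hu : 1 < u) (ht : 0 < t) (ha : 0 < a) (hta : Real.exp 1 ≤ t * a) :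
    IntegrableOn (fun y => y⁻¹ * gAux u (t * y)) (Set.Ioi a) ∧
    ∫ y in Set.Ioi a, y⁻¹ * gAux u (t * y) = (Real.log (t * a)) ^ (1 - u) / (u - 1) := by
  have hlog : ∀ y ∈ Set.Ici a, 1 ≤ Real.log (t * y) ∧ Real.exp 1 ≤ t * y := by
    intro y hy
    have : t * a ≤ t * y := by gcongr; exact hy
    have h2 := hta.trans this
    refine ⟨?_, h2⟩
    rw [Real.le_log_iff_exp_le (lt_of_lt_of_le (Real.exp_pos 1) h2)]; exact h2
  have hd : ∀ y ∈ Set.Ici a, HasDerivAt (fun y => - ((Real.log (t * y)) ^ (1 - u) / (u - 1)))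
      (y⁻¹ * gAux u (t * y)) y := by
    intro y hy
    obtain ⟨h1, h2⟩ := hlog y hy
    have hy0 : 0 < y := lt_of_lt_of_le ha hy
    have hl : HasDerivAt (fun y => Real.log (t * y)) ((t * 1) / (t * y)) y :=
      HasDerivAt.log ((hasDerivAt_id y).const_mul t) (by positivity)
    have := ((hl.rpow_const (p := 1 - u) (Or.inl (by linarith))).div_const (u - 1)).neg
    refine HasDerivAt.congr_deriv this ?_
    rw [gAux, if_pos h2, show 1 - u - 1 = -u by ring]
    have : u - 1 ≠ 0 := by linarith
    field_simp
    ring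
  have hpos : ∀ y ∈ Set.Ioi a, 0 ≤ y⁻¹ * gAux u (t * y) := by
    intro y hy
    have hy0 : 0 < y := lt_trans ha hy
    exact mul_nonneg (by positivity) (gAux_nonneg _ _)
  have hlim : Tendsto (fun y => - ((Real.log (t * y)) ^ (1 - u) / (u - 1))) atTop (nhds 0) := by
    have h1 : Tendsto (fun y => Real.log (t * y)) atTop atTop :=
      Real.tendsto_log_atTop.comp (tendsto_id.const_mul_atTop ht)
    have h2 := (tendsto_rpow_neg_atTop (y := u - 1) (by linarith)).comp h1
    have h3 := (h2.div_const (u - 1)).neg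
    simpa [Function.comp_def] using h3
  refine ⟨integrableOn_Ioi_deriv_of_nonneg' hd hpos hlim, ?_⟩
  rw [integral_Ioi_of_hasDerivAt_of_nonneg' hd hpos hlim]
  ring

lemma f_meas (u t : ℝ) : Measurable (fun y : ℝ => Real.exp (-1 / y) * y⁻¹ * gAux u (t * y)) := by
  have := (gAux_meas u).comp (measurable_const_mul t)
  have h2 : Measurable (fun y : ℝ => Real.exp (-1 / y) * y⁻¹) := by fun_prop
  exact h2.mul this

lemma f_int (u t : ℝ) (hu : 1 < u) (ht : 0 < t) :
    IntegrableOn (fun y : ℝ => Real.exp (-1 / y) * y⁻¹ * gAux u (t * y)) (Set.Ioi 0) := by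
  have hM : 0 < Real.exp 1 / t := by positivity
  rw [← Set.Ioc_union_Ioi_eq_Ioi hM.le]
  refine IntegrableOn.union ?_ ?_
  · refine Integrable.mono' (g := fun _ => (1 : ℝ)) (integrableOn_const (by simp) )
      (f_meas u t).aestronglyMeasurable ?_
    refine (ae_restrict_iff' measurableSet_Ioc).2 (Eventually.of_forall fun y hy => ?_)
    rw [Real.norm_of_nonneg (mul_nonneg (kern_nonneg y hy.1) (gAux_nonneg _ _))]
    exact mul_le_one₀ (kern_le_one y hy.1) (gAux_nonneg _ _) (gAux_le_one _ _ hu)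
  · refine Integrable.mono' (tail_aux u t (Real.exp 1 / t) hu ht hM (by field_simp; rfl)).1
      (f_meas u t).aestronglyMeasurable ?_
    refine (ae_restrict_iff' measurableSet_Ioi).2 (Eventually.of_forall fun y hy => ?_)
    have hy0 : 0 < y := hM.trans hy
    rw [Real.norm_of_nonneg (mul_nonneg (kern_nonneg y hy0) (gAux_nonneg _ _))]
    refine mul_le_mul_of_nonneg_right ?_ (gAux_nonneg _ _)
    exact mul_le_of_le_one_left (by positivity) (exp_le_one_aux y hy0)

lemma f_bound (u t : ℝ) (hu : 1 < u) (ht : Real.exp 2 ≤ t) :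
    |(∫ y in Set.Ioi (0:ℝ), Real.exp (-1 / y) * y⁻¹ * gAux u (t * y)) -
      (Real.log t) ^ (1 - u) / (u - 1)| ≤
      ((Real.log t / 2) ^ (-u) + t ^ (-(1/2) : ℝ)) + (Real.log t) ^ (-u) := by
  have ht0 : 0 < t := lt_of_lt_of_le (Real.exp_pos 2) ht
  have hL : 2 ≤ Real.log t := by rwa [Real.le_log_iff_exp_le ht0]
  have hte : Real.exp 1 ≤ t := le_trans (Real.exp_le_exp.2 (by norm_num)) ht
  have hi := f_int u t hu ht0
  obtain ⟨ti, tv⟩ := tail_aux u t 1 hu ht0 one_pos (by simpa using hte)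
  rw [mul_one] at tv
  rw [← Set.Ioc_union_Ioi_eq_Ioi (zero_le_one (α := ℝ))] at hi ⊢
  rw [setIntegral_union (Set.Ioc_disjoint_Ioi le_rfl) measurableSet_Ioi hi.left_of_union
    hi.right_of_union, ← tv, add_sub_assoc, ← integral_sub hi.right_of_union ti]
  refine (abs_add_le _ _).trans (add_le_add ?_ ?_)
  · have := norm_setIntegral_le_of_norm_le_const (μ := volume) (s := Set.Ioc (0:ℝ) 1)
      (f := fun y : ℝ => Real.exp (-1 / y) * y⁻¹ * gAux u (t * y))
      (C := (Real.log t / 2) ^ (-u) + t ^ (-(1/2) : ℝ)) (by simp) ?_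
    · simpa using this
    intro y hy
    have hy0 := hy.1
    rw [Real.norm_of_nonneg (mul_nonneg (kern_nonneg y hy0) (gAux_nonneg _ _))]
    by_cases hc : y ≤ t ^ (-(1/2) : ℝ)
    · have h1 : Real.exp (-1 / y) * y⁻¹ * gAux u (t * y) ≤ y * 1 :=
        mul_le_mul (kern_le y hy0) (gAux_le_one _ _ hu) (gAux_nonneg _ _) hy0.le
      have h2 : 0 ≤ (Real.log t / 2) ^ (-u) := by positivity
      linarith
    · push Not at hc
      have h1 : Real.exp (-1 / y) * y⁻¹ * gAux u (t * y) ≤ 1 * gAux u (t * y) :=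
        mul_le_mul_of_nonneg_right (kern_le_one y hy0) (gAux_nonneg _ _)
      have h2 : 0 ≤ t ^ (-(1/2) : ℝ) := by positivity
      have h3 : Real.log t / 2 ≤ Real.log (t * y) := by
        rw [Real.log_mul ht0.ne' hy0.ne']
        have := Real.log_le_log (by positivity) hc.le
        rw [Real.log_rpow ht0] at this
        linarith
      have h4 : Real.exp 1 ≤ t * y := by
        rw [← Real.le_log_iff_exp_le (by positivity)]; linarith
      have h5 : gAux u (t * y) ≤ (Real.log t / 2) ^ (-u) := by
        rw [gAux, if_pos h4]
        exact Real.rpow_le_rpow_of_nonpos (by linarith) h3 (by linarith)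
      linarith
  · have hint : IntegrableOn (fun y : ℝ => (Real.log t) ^ (-u) * y ^ (-2 : ℝ)) (Set.Ioi 1) :=
      (integrableOn_Ioi_rpow_of_lt (by norm_num) one_pos).const_mul _
    have := norm_integral_le_of_norm_le (μ := volume.restrict (Set.Ioi (1:ℝ)))
      (f := fun y : ℝ => Real.exp (-1 / y) * y⁻¹ * gAux u (t * y) - y⁻¹ * gAux u (t * y)) hint ?_
    · refine this.trans (le_of_eq ?_)
      rw [integral_const_mul, integral_Ioi_rpow_of_lt (by norm_num) one_pos]
      norm_num
    refine (ae_restrict_iff' measurableSet_Ioi).2 (Eventually.of_forall fun y hy => ?_)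
    have hy1 : (1:ℝ) < y := hy
    have hy0 : 0 < y := by linarith
    have e1 : Real.exp (-1 / y) * y⁻¹ * gAux u (t * y) - y⁻¹ * gAux u (t * y)
      = - ((1 - Real.exp (-1 / y)) * y⁻¹ * gAux u (t * y)) := by ring
    have e2 : 0 ≤ 1 - Real.exp (-1 / y) := by linarith [exp_le_one_aux y hy0]
    have e3 : 1 - Real.exp (-1 / y) ≤ y⁻¹ := by
      have := Real.add_one_le_exp (-1 / y)
      have h4 : -1 / y = -(y⁻¹) := by ring
      rw [h4] at this ⊢
      linarith
    have hty : t ≤ t * y := by nlinarith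
    have e4 : gAux u (t * y) ≤ (Real.log t) ^ (-u) := by
      rw [gAux, if_pos (hte.trans hty)]
      exact Real.rpow_le_rpow_of_nonpos (by linarith) (Real.log_le_log ht0 hty) (by linarith)
    rw [e1, norm_neg, Real.norm_of_nonneg
      (mul_nonneg (mul_nonneg e2 (by positivity)) (gAux_nonneg _ _))]
    have e5 : y ^ (-2 : ℝ) = y⁻¹ * y⁻¹ := by
      rw [Real.rpow_neg hy0.le, show (2:ℝ) = ((2:ℕ):ℝ) by norm_num, Real.rpow_natCast]
      rw [sq, mul_inv]
    rw [e5, mul_comm]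
    exact mul_le_mul e4 (mul_le_mul_of_nonneg_right e3 (by positivity))
      (mul_nonneg e2 (by positivity)) (by positivity)

lemma err_lim (u : ℝ) : Tendsto (fun t : ℝ =>
    (((Real.log t / 2) ^ (-u) + t ^ (-(1/2) : ℝ)) + (Real.log t) ^ (-u)) *
      ((u - 1) * (Real.log t) ^ (u - 1))) atTop (nhds 0) := by
  have h1 : Tendsto (fun t : ℝ => (Real.log t)⁻¹) atTop (nhds 0) :=
    tendsto_inv_atTop_zero.comp Real.tendsto_log_atTop
  have h2 : Tendsto (fun t : ℝ => (Real.log t) ^ (u - 1) / t ^ ((1/2) : ℝ)) atTop (nhds 0) :=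
    (isLittleO_log_rpow_rpow_atTop (u - 1) (by norm_num)).tendsto_div_nhds_zero
  have h3 := (h1.const_mul ((u - 1) * (2 ^ u + 1))).add (h2.const_mul (u - 1))
  simp only [mul_zero, add_zero] at h3
  refine h3.congr' ?_
  filter_upwards [eventually_gt_atTop (Real.exp 1)] with t ht
  have ht0 : 0 < t := (Real.exp_pos 1).trans ht
  have hL : 1 < Real.log t := by rwa [Real.lt_log_iff_exp_lt ht0]
  have hL0 : 0 < Real.log t := by linarith
  rw [Real.div_rpow hL0.le (by norm_num), Real.rpow_neg ht0.le, Real.rpow_neg hL0.le,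
    Real.rpow_neg (by norm_num : (0:ℝ) ≤ 2), Real.rpow_sub_one hL0.ne']
  have a1 : Real.log t ^ u ≠ 0 := by positivity
  have a2 : (2:ℝ) ^ u ≠ 0 := by positivity
  have a3 : t ^ ((1/2):ℝ) ≠ 0 := by positivity
  field_simp
  ring

theorem lstar_log_power (u : ℝ) (hu : 1 < u)
    (ℓ : ℝ → ℝ)
    (hℓ_def : ∀ s : ℝ, 0 < s →
      ℓ s = if Real.exp 1 ≤ s then (Real.log s) ^ (-u) else 1) :
    (∀ c : ℝ, 0 < c → Tendsto (fun t : ℝ => ℓ (c * t) / ℓ t) atTop (nhds 1)) ∧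
    (∀ t : ℝ, 0 < t →
      IntegrableOn (fun y : ℝ => Real.exp (-1 / y) * y⁻¹ * ℓ (t * y)) (Set.Ioi 0)) ∧
    Tendsto (fun t : ℝ =>
        (∫ y in Set.Ioi (0 : ℝ), Real.exp (-1 / y) * y⁻¹ * ℓ (t * y)) *
          (u - 1) * (Real.log t) ^ (u - 1))
      atTop (nhds 1) := by
  have hcongr : ∀ t : ℝ, 0 < t → Set.EqOn (fun y : ℝ => Real.exp (-1 / y) * y⁻¹ * ℓ (t * y))
      (fun y : ℝ => Real.exp (-1 / y) * y⁻¹ * gAux u (t * y)) (Set.Ioi 0) := by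
    intro t ht y hy
    have hy0 : (0:ℝ) < y := hy
    simp only [gAux, hℓ_def (t * y) (by positivity)]
  refine ⟨?_, ?_, ?_⟩
  · intro c hc
    have h1 : Tendsto (fun t : ℝ => (Real.log c * (Real.log t)⁻¹ + 1) ^ (-u)) atTop (nhds 1) := by
      have h0 : Tendsto (fun t : ℝ => (Real.log t)⁻¹) atTop (nhds 0) :=
        tendsto_inv_atTop_zero.comp Real.tendsto_log_atTop
      have h2 := (h0.const_mul (Real.log c)).add_const 1
      have h3 := h2.rpow_const (p := -u) (Or.inl (by norm_num))
      simpa using h3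
    refine h1.congr' ?_
    have hct : Tendsto (fun t : ℝ => c * t) atTop atTop := tendsto_id.const_mul_atTop hc
    filter_upwards [eventually_ge_atTop (Real.exp 1),
      hct.eventually (eventually_ge_atTop (Real.exp 1))] with t ht hct
    have ht0 : 0 < t := lt_of_lt_of_le (Real.exp_pos 1) ht
    have hL : 1 ≤ Real.log t := by rwa [Real.le_log_iff_exp_le ht0]
    have hLc : 1 ≤ Real.log (c * t) := by rwa [Real.le_log_iff_exp_le (by positivity)]
    rw [hℓ_def _ ht0, hℓ_def _ (by positivity : 0 < c * t), if_pos ht, if_pos hct,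
      ← Real.div_rpow (by linarith) (by linarith), Real.log_mul hc.ne' ht0.ne']
    congr 1
    have : Real.log t ≠ 0 := by linarith
    field_simp
  · intro t ht
    exact (f_int u t hu ht).congr_fun (hcongr t ht).symm measurableSet_Ioi
  · rw [tendsto_iff_norm_sub_tendsto_zero]
    refine squeeze_zero' (Eventually.of_forall fun _ => norm_nonneg _) ?_ (err_lim u)
    filter_upwards [eventually_ge_atTop (Real.exp 2)] with t ht
    have ht0 : 0 < t := lt_of_lt_of_le (Real.exp_pos 2) ht
    have hL : 2 ≤ Real.log t := by rwa [Real.le_log_iff_exp_le ht0]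
    have hL0 : 0 < Real.log t := by linarith
    have hu1 : 0 < u - 1 := by linarith
    rw [setIntegral_congr_fun measurableSet_Ioi (hcongr t ht0)]
    have hp : 0 ≤ (u - 1) * (Real.log t) ^ (u - 1) := by positivity
    have hb := mul_le_mul_of_nonneg_right (f_bound u t hu ht) hp
    refine le_trans (le_of_eq ?_) hb
    rw [Real.norm_eq_abs]
    nth_rewrite 1 [← abs_of_nonneg hp]
    rw [← abs_mul]
    congr 1
    have : (Real.log t) ^ (1 - u) * (Real.log t) ^ (u - 1) = 1 := by
      rw [← Real.rpow_add hL0]; simp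
    rw [sub_mul, mul_assoc]
    congr 1
    refine this.symm.trans ?_
    field_simp
end

section
/- Let ℓ : (0,∞) → (0,∞) be a measurable function that is slowly varying at ∞ (i.e., for every c > 0, ℓ(ct)/ℓ(t) → 1 as t → ∞), and assume that the integral ℓ*(t) = ∫₀^∞ e^{−1/y} y^{−1} ℓ(ty) dy converges for all sufficiently large t. Then ℓ*(t)/ℓ(t) → ∞ as t → ∞. -/
open Filter MeasureTheory Real

lemma aux_lintegral_top :
    ∫⁻ y in Set.Ioi (0 : ℝ), ENNReal.ofReal (Real.exp (-1 / y) * y⁻¹) = ⊤ := by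
  by_contra h
  have hm : Measurable (fun y : ℝ => Real.exp (-1 / y) * y⁻¹) := by fun_prop
  have hi : IntegrableOn (fun y : ℝ => Real.exp (-1 / y) * y⁻¹) (Set.Ioi 0) := by
    refine (lintegral_ofReal_ne_top_iff_integrable hm.aestronglyMeasurable ?_).1 h
    filter_upwards [ae_restrict_mem measurableSet_Ioi] with y hy
    have : (0 : ℝ) < y := hy
    simp only [Pi.zero_apply]
    positivity
  have hi1 := (hi.mono_set (Set.Ioi_subset_Ioi (zero_le_one' ℝ))).const_mul (Real.exp 1)
  refine not_integrableOn_Ioi_inv (a := (1 : ℝ)) (Integrable.mono' hi1 (by fun_prop) ?_)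
  filter_upwards [ae_restrict_mem measurableSet_Ioi] with y hy
  have hy1 : (1 : ℝ) < y := hy
  have hy0 : 0 < y := by linarith
  rw [Real.norm_of_nonneg (by positivity), ← mul_assoc, ← Real.exp_add]
  have h1 : (1 : ℝ) ≤ Real.exp (1 + -1 / y) := by
    apply Real.one_le_exp
    have : y⁻¹ ≤ 1 := inv_le_one_of_one_le₀ hy1.le
    rw [neg_div, one_div]; linarith
  exact le_mul_of_one_le_left (by positivity) h1

/-- If `ℓ : (0,∞) → (0,∞)` is measurable and slowly varying at `∞`, and
`ℓ*(t) = ∫₀^∞ e^{-1/y} y^{-1} ℓ(ty) dy` converges for all sufficiently large `t`,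
then `ℓ*(t)/ℓ(t) → ∞` as `t → ∞`. -/
theorem lstar_dominates_ell (ℓ : ℝ → ℝ) (hmeas : Measurable ℓ)
    (hℓpos : ∀ t : ℝ, 0 < t → 0 < ℓ t)
    (hℓsv : ∀ c : ℝ, 0 < c → Tendsto (fun t : ℝ => ℓ (c * t) / ℓ t) atTop (nhds 1))
    (hconv : ∀ᶠ t : ℝ in atTop,
      IntegrableOn (fun y : ℝ => Real.exp (-1 / y) * y⁻¹ * ℓ (t * y)) (Set.Ioi 0)) :
    Tendsto (fun t : ℝ =>
        (∫ y in Set.Ioi (0 : ℝ), Real.exp (-1 / y) * y⁻¹ * ℓ (t * y)) / ℓ t)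
      atTop atTop := by
  apply tendsto_of_seq_tendsto
  intro x hx
  change Tendsto (fun n : ℕ => (∫ y in Set.Ioi (0 : ℝ), Real.exp (-1 / y) * y⁻¹ * ℓ (x n * y)) / ℓ (x n)) atTop atTop
  rw [← ENNReal.tendsto_ofReal_nhds_top]
  set F : ℕ → ℝ → ENNReal := fun n y =>
    ENNReal.ofReal (Real.exp (-1 / y) * y⁻¹ * ℓ (x n * y) / ℓ (x n)) with hF
  have hFm : ∀ n, Measurable (F n) := fun n => by
    have : Measurable fun y => ℓ (x n * y) := hmeas.comp (measurable_const_mul _)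
    simp only [hF]
    fun_prop
  have hfatou := lintegral_liminf_le (u := atTop) (μ := volume.restrict (Set.Ioi (0 : ℝ))) hFm
  have hlim : ∫⁻ y in Set.Ioi (0 : ℝ), liminf (fun n => F n y) atTop = ⊤ := by
    rw [← aux_lintegral_top]
    refine setLIntegral_congr_fun measurableSet_Ioi fun y hy => ?_
    refine Tendsto.liminf_eq ?_
    refine ENNReal.tendsto_ofReal ?_
    have h := ((hℓsv y hy).comp hx).const_mul (Real.exp (-1 / y) * y⁻¹)
    rw [mul_one] at h
    refine h.congr fun n => ?_
    simp only [Function.comp]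
    rw [mul_comm y, mul_div_assoc]
  rw [hlim, top_le_iff] at hfatou
  have ht : Tendsto (fun n => ∫⁻ y in Set.Ioi (0 : ℝ), F n y) atTop (nhds ⊤) :=
    tendsto_of_le_liminf_of_limsup_le hfatou.ge le_top
  refine ht.congr' ?_
  filter_upwards [hx.eventually hconv, hx.eventually (eventually_gt_atTop 0)] with n hn hn0
  have hp := hℓpos _ hn0
  rw [← integral_div, ofReal_integral_eq_lintegral_ofReal (hn.div_const _)]
  filter_upwards [ae_restrict_mem measurableSet_Ioi] with y hy
  have hy0 : (0 : ℝ) < y := hy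
  have := hℓpos _ (mul_pos hn0 hy0)
  simp only [Pi.zero_apply]
  positivity
end
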